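/- Assume that f is a first integral of V, i.e., ⟨V(x), ∇f(x)⟩ = 0 for all x ∈ Ω, and that Condition (B) holds. Then div V(x*) = 0 for every x* ∈ Γ such that V(x*) = 0. -/

import Mathlib

open Filter Topology

/-- Partial derivative of `g : ℝⁿ → ℝ` in the `i`-th coordinate direction. -/
noncomputable def pderiv' {n : ℕ} (g : (Fin n → ℝ) → ℝ) (i : Fin n) (x : Fin n → ℝ) : ℝ :=
  fderiv ℝ g x (Pi.single i 1)

/-- Divergence of a vector field on ℝⁿ. -/
noncomputable def diverg {n : ℕ} (V : (Fin n → ℝ) → (Fin n → ℝ)) (x : Fin n → ℝ) : ℝ :=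
  ∑ i, pderiv' (fun y => V y i) i x

/-- Gradient of `g : ℝⁿ → ℝ`. -/
noncomputable def grad' {n : ℕ} (g : (Fin n → ℝ) → ℝ) (x : Fin n → ℝ) : Fin n → ℝ :=
  fun i => pderiv' g i x

/-- The Euclidean inner product on ℝⁿ. -/
noncomputable def dotp {n : ℕ} (u w : Fin n → ℝ) : ℝ := ∑ i, u i * w i

/-- Condition (A): for every `x* ∈ Γ`, `|f x|^(r+1) · div W x → 0` as `x → x*`
with `x ∈ Ω \ Γ`. -/
def CondA {n : ℕ} (Ω Γ : Set (Fin n → ℝ)) (f : (Fin n → ℝ) → ℝ) (r : ℝ)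
    (W : (Fin n → ℝ) → (Fin n → ℝ)) : Prop :=
  ∀ xs ∈ Γ, Filter.Tendsto (fun x => |f x| ^ (r + 1) * diverg W x)
    (nhdsWithin xs (Ω \ Γ)) (nhds 0)

/-- Condition (B): for every `x* ∈ Γ` with `V x* = 0`, one has
`|f x|^r · div W x → 0` and `|f x|^(r+1) · ∂(div W)/∂x_i x → 0` as `x → x*`
with `x ∈ Ω \ Γ`, for each `i`. -/
def CondB {n : ℕ} (Ω Γ : Set (Fin n → ℝ)) (f : (Fin n → ℝ) → ℝ) (r : ℝ)
    (V W : (Fin n → ℝ) → (Fin n → ℝ)) : Prop :=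
  ∀ xs ∈ Γ, V xs = 0 →
    Filter.Tendsto (fun x => |f x| ^ r * diverg W x) (nhdsWithin xs (Ω \ Γ)) (nhds 0) ∧
    ∀ i : Fin n, Filter.Tendsto (fun x => |f x| ^ (r + 1) * pderiv' (diverg W) i x)
      (nhdsWithin xs (Ω \ Γ)) (nhds 0)

/-- Multiplying a vector field by a function of one of its first integrals multiplies the
divergence by that function. -/
lemma diverg_eq_of_eventuallyEq_comp_smul {n : ℕ} {f : (Fin n → ℝ) → ℝ}
    {V W : (Fin n → ℝ) → (Fin n → ℝ)} {g : ℝ → ℝ} {x : Fin n → ℝ}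
    (hf : DifferentiableAt ℝ f x) (hV : DifferentiableAt ℝ V x)
    (hg : DifferentiableAt ℝ g (f x)) (hfi : dotp (V x) (grad' f x) = 0)
    (hW : W =ᶠ[𝓝 x] fun y => g (f y) • V y) :
    diverg W x = g (f x) * diverg V x := by
  have hpartial (i : Fin n) : pderiv' (fun y => W y i) i x =
      g (f x) * pderiv' (fun y => V y i) i x + deriv g (f x) * (V x i * grad' f x i) := by
    have hWi : (fun y => W y i) =ᶠ[𝓝 x] fun y => g (f y) * V y i :=
      hW.mono fun y hy => by simp [hy]
    have hVi : DifferentiableAt ℝ (fun y => V y i) x := differentiableAt_pi.1 hV i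
    have hgf := hg.hasDerivAt.comp_hasFDerivAt x hf.hasFDerivAt
    have hmul : HasFDerivAt (fun y => g (f y) * V y i) _ x := hgf.mul hVi.hasFDerivAt
    unfold grad' pderiv'
    rw [hWi.fderiv_eq, hmul.fderiv]
    simp
    ring
  unfold dotp at hfi
  unfold diverg
  simp only [hpartial, Finset.sum_add_distrib, ← Finset.mul_sum, hfi, mul_zero, add_zero]

/-- A function with nonzero gradient at a zero has that zero as a limit of points where it does
not vanish. -/
lemma frequently_ne_zero_of_grad'_ne_zero {n : ℕ} {f : (Fin n → ℝ) → ℝ} {x : Fin n → ℝ}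
    (hx : grad' f x ≠ 0) : ∃ᶠ y in 𝓝 x, f y ≠ 0 := by
  intro h
  have h0 : f =ᶠ[𝓝 x] fun _ => 0 := h.mono fun y hy => not_not.1 hy
  apply hx
  ext i
  simp [grad', pderiv', h0.fderiv_eq]

/-- The divergence of a `C¹` vector field is continuous. -/
lemma ContDiffAt.continuousAt_diverg {n : ℕ} {V : (Fin n → ℝ) → (Fin n → ℝ)} {x : Fin n → ℝ}
    (hV : ContDiffAt ℝ 1 V x) : ContinuousAt (diverg V) x := by
  unfold diverg pderiv'
  refine tendsto_finsetSum _ fun i _ => ?_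
  have hVi : ContDiffAt ℝ 1 (fun y => V y i) x := contDiffAt_pi.1 hV i
  exact (hVi.continuousAt_fderiv one_ne_zero).clm_apply continuousAt_const

/-- If `f` is a first integral of `V` and Condition (B) holds, then `div V x* = 0`
for every `x* ∈ Γ` with `V x* = 0`. -/
theorem stmt3 {n : ℕ} (hn : 2 ≤ n) (Ω Γ : Set (Fin n → ℝ)) (hΩ : IsOpen Ω)
    (f : (Fin n → ℝ) → ℝ) (s : ℕ) (hs : 2 ≤ s) (hf : ContDiffOn ℝ s f Ω)
    (hΓ : Γ = {x | x ∈ Ω ∧ f x = 0}) (hΓne : Γ.Nonempty)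
    (hreg : ∀ x ∈ Γ, grad' f x ≠ 0)
    (V : (Fin n → ℝ) → (Fin n → ℝ)) (hV : ContDiffOn ℝ s V Ω)
    (r : ℝ) (hr : 0 < r)
    (W : (Fin n → ℝ) → (Fin n → ℝ))
    (hW : ∀ x ∈ Ω \ Γ, W x = |f x| ^ (-r) • V x)
    (hfi : ∀ x ∈ Ω, dotp (V x) (grad' f x) = 0)
    (hB : CondB Ω Γ f r V W) :
    ∀ xs ∈ Γ, V xs = 0 → diverg V xs = 0 := by
  intro xs hxs hVxs
  have hs1 : (1 : WithTop ℕ∞) ≤ s := by exact_mod_cast one_le_two.trans hs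
  have hxsΩ : xs ∈ Ω := (hΓ ▸ hxs : xs ∈ {x | x ∈ Ω ∧ f x = 0}).1
  have hfx {x} (hx : x ∈ Ω) : ContDiffAt ℝ 1 f x := (hf.contDiffAt (hΩ.mem_nhds hx)).of_le hs1
  have hVx {x} (hx : x ∈ Ω) : ContDiffAt ℝ 1 V x := (hV.contDiffAt (hΩ.mem_nhds hx)).of_le hs1
  have hmem {x} (hx : x ∈ Ω) : x ∈ Ω \ Γ ↔ f x ≠ 0 := by simp [hΓ, hx]
  have hdiv : ∀ x ∈ Ω \ Γ, |f x| ^ r * diverg W x = diverg V x := by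
    intro x hx
    have hfx0 : f x ≠ 0 := (hmem hx.1).1 hx
    have hW' : W =ᶠ[𝓝 x] fun y => (fun t : ℝ => |t| ^ (-r)) (f y) • V y := by
      filter_upwards [hΩ.mem_nhds hx.1, (hfx hx.1).continuousAt.eventually_ne hfx0] with y hy hy0
      exact hW y ((hmem hy).2 hy0)
    have hg : DifferentiableAt ℝ (fun t : ℝ => |t| ^ (-r)) (f x) :=
      (differentiableAt_abs hfx0).rpow_const (Or.inl (abs_ne_zero.2 hfx0))
    rw [diverg_eq_of_eventuallyEq_comp_smul ((hfx hx.1).differentiableAt one_ne_zero)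
      ((hVx hx.1).differentiableAt one_ne_zero) hg (hfi x hx.1) hW', ← mul_assoc,
      ← Real.rpow_add (abs_pos.2 hfx0), add_neg_cancel, Real.rpow_zero, one_mul]
  have hne : (𝓝[Ω \ Γ] xs).NeBot := by
    rw [← mem_closure_iff_nhdsWithin_neBot, mem_closure_iff_frequently]
    exact ((frequently_ne_zero_of_grad'_ne_zero (hreg xs hxs)).and_eventually
      (hΩ.mem_nhds hxsΩ)).mono fun y hy => (hmem hy.2).2 hy.1
  exact tendsto_nhds_unique ((hVx hxsΩ).continuousAt_diverg.tendsto.mono_left nhdsWithin_le_nhds)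
    ((hB xs hxs hVxs).1.congr' (eventually_nhdsWithin_of_forall hdiv))
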